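/- arXiv:2210.09577 — 4 statements merged into one kernel-verified Lean document; each statement's English description precedes it below -/
import Mathlib

section
/- Let G be a Moore graph of degree 57 and let x, y be adjacent vertices of G. Let Γ be the subgraph of G induced by the set of vertices at distance 2 (in G) from both x and y, and let Γ₃ be the graph whose vertices are the vertices of Γ, with two vertices adjacent in Γ₃ if and only if their distance in Γ equals 3. Then Γ₃ is isomorphic to the Cartesian (box) product of two copies of the complete graph K₅₆. -/
open SimpleGraph

/-!
Let `A = N(x) \ {y}` and `B = N(y) \ {x}`. A vertex `v` of `Γ` has exactly one neighbour `a` in `A`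
and exactly one neighbour `b` in `B`. Conversely `a ∈ A` and `b ∈ B` are distinct and nonadjacent,
so they have exactly one common neighbour, and it lies in `Γ`. Thus `v ↦ (a, b)` puts coordinates in
`A × B` on the vertices of `Γ`, and `a`, `b` are the only neighbours of `v` outside `Γ`.

If `v` and `w` differ in both coordinates, then any common neighbour of theirs lies in `Γ`, so their
distance in `Γ` is at most 2. If they agree in exactly one coordinate, then that coordinate is their
only common neighbour in `G`, and their distance in `Γ` exceeds 2. For `v = (a, b)` and
`w = (a, b')`, any third `c ∈ B` gives a path of length 3: `v` has a neighbour `u = (a₁, c)` with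
`a₁ ≠ a`, and `u` and `w` differ in both coordinates.
-/

section

open Cardinal

variable {V : Type*} {G : SimpleGraph V}

/-- Moore graphs of diameter two, in the local form that also makes sense for infinite graphs:
adjacent vertices have no common neighbour and distinct nonadjacent ones have exactly one. As with
`SimpleGraph.IsSRGWith _ _ 0 1`, complete graphs on at most two vertices are not excluded; neither
are stars, since regularity is not required. -/
structure IsMoore (G : SimpleGraph V) : Prop where
  commonNeighbors_eq_empty : ∀ {a b}, G.Adj a b → G.commonNeighbors a b = ∅
  existsUnique_mem_commonNeighbors :
    ∀ {a b}, a ≠ b → ¬G.Adj a b → ∃! c, c ∈ G.commonNeighbors a b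

/-- The vertices at distance two from both `x` and `y`, i.e. the vertex set of `Γ`. -/
def farSet (G : SimpleGraph V) (x y : V) : Set V :=
  {v | G.dist x v = 2 ∧ G.dist y v = 2}

/-- The vertex `v` of `Γ` has coordinates `(a, b)`: `a` is a common neighbour of `x` and `v`, and
`b` is a common neighbour of `y` and `v`. -/
structure HasCoords (G : SimpleGraph V) (x y v a b : V) : Prop where
  mem_farSet : v ∈ farSet G x y
  left_mem : a ∈ G.commonNeighbors x v
  right_mem : b ∈ G.commonNeighbors y v

theorem farSet_comm (G : SimpleGraph V) (x y : V) : farSet G x y = farSet G y x :=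
  Set.ext fun _ => and_comm

theorem HasCoords.symm {x y v a b : V} (h : HasCoords G x y v a b) : HasCoords G y x v b a :=
  ⟨h.mem_farSet.symm, h.right_mem, h.left_mem⟩

theorem dist_induce_congr {s t : Set V} (h : s = t) (v w : s) :
    (G.induce s).dist v w = (G.induce t).dist ⟨v, h ▸ v.2⟩ ⟨w, h ▸ w.2⟩ := by
  subst h
  rfl

theorem dist_eq_three_of_two_lt_edist_of_adj {u v w z : V} (h : 2 < G.edist u z) (huv : G.Adj u v)
    (hvw : G.Adj v w) (hwz : G.Adj w z) : G.dist u z = 3 := by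
  let p : G.Walk u z := .cons huv (.cons hvw (.cons hwz .nil))
  have hle : G.dist u z ≤ 3 := dist_le p
  rw [← p.reachable.coe_dist_eq_edist] at h
  have hlt : 2 < G.dist u z := mod_cast h
  omega

theorem mk_neighborSet_sdiff_singleton {x y : V} {k : ℕ} [Fintype (G.neighborSet x)]
    (hdeg : G.degree x = k + 1) (hxy : G.Adj x y) : #↥(G.neighborSet x \ {y}) = k := by
  have hy : y ∈ G.neighborSet x := hxy
  rw [← Set.cast_ncard (Set.toFinite _), Set.ncard_sdiff_singleton_of_mem hy, ← Nat.card_coe_set_eq,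
    Nat.card_eq_fintype_card, card_neighborSet_eq_degree, hdeg, Nat.add_sub_cancel]

/-- The box product of two graph isomorphisms. -/
def boxProdCongr {α α' β β' : Type*} {G : SimpleGraph α} {G' : SimpleGraph α'}
    {H : SimpleGraph β} {H' : SimpleGraph β'} (e : G ≃g G') (f : H ≃g H') :
    (G □ H) ≃g (G' □ H') where
  toEquiv := e.toEquiv.prodCongr f.toEquiv
  map_rel_iff' := or_congr (and_congr e.map_adj_iff f.injective.eq_iff)
    (and_congr f.map_adj_iff e.injective.eq_iff)

namespace IsMoore

theorem of_isSRGWith [Fintype V] [DecidableRel G.Adj] {n k : ℕ}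
    (hG : G.IsSRGWith n k 0 1) : IsMoore G where
  commonNeighbors_eq_empty {a b} hab :=
    Set.isEmpty_coe_sort.1 (Fintype.card_eq_zero_iff.1 (hG.of_adj a b hab))
  existsUnique_mem_commonNeighbors hne hab := by
    obtain ⟨c, hc⟩ := Fintype.card_eq_one_iff.1 (hG.of_not_adj hne hab)
    exact ⟨c, c.2, fun d hd => congrArg Subtype.val (hc ⟨d, hd⟩)⟩

variable {x y a a' b b' c : V} (hG : IsMoore G)
include hG

section Coordinates

variable {v w : V}

theorem not_adj_of_adj_of_adj (hac : G.Adj a c) (hbc : G.Adj b c) : ¬G.Adj a b := fun hab =>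
  Set.eq_empty_iff_forall_notMem.1 (hG.commonNeighbors_eq_empty hab) c ⟨hac, hbc⟩

theorem subsingleton_commonNeighbors (hab : a ≠ b) : (G.commonNeighbors a b).Subsingleton :=
  fun _ hc _ hd => (hG.existsUnique_mem_commonNeighbors hab
    (hG.not_adj_of_adj_of_adj hc.1 hc.2)).unique hc hd

theorem dist_eq_two_iff : G.dist a b = 2 ↔ a ≠ b ∧ ¬G.Adj a b := by
  rw [SimpleGraph.dist, ENat.toNat_eq_iff two_ne_zero, Nat.cast_ofNat, edist_eq_two_iff]
  exact ⟨fun h => ⟨h.1, h.2.1⟩,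
    fun h => ⟨h.1, h.2, (hG.existsUnique_mem_commonNeighbors h.1 h.2).exists⟩⟩

theorem mem_farSet_iff : v ∈ farSet G x y ↔ (x ≠ v ∧ ¬G.Adj x v) ∧ (y ≠ v ∧ ¬G.Adj y v) :=
  and_congr hG.dist_eq_two_iff hG.dist_eq_two_iff

theorem exists_hasCoords (hv : v ∈ farSet G x y) : ∃ a b, HasCoords G x y v a b := by
  obtain ⟨⟨hxv, hnxv⟩, ⟨hyv, hnyv⟩⟩ := hG.mem_farSet_iff.1 hv
  obtain ⟨a, ha⟩ := (hG.existsUnique_mem_commonNeighbors hxv hnxv).exists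
  obtain ⟨b, hb⟩ := (hG.existsUnique_mem_commonNeighbors hyv hnyv).exists
  exact ⟨a, b, hv, ha, hb⟩

theorem left_coord_mem (hv : HasCoords G x y v a b) : a ∈ G.neighborSet x \ {y} := by
  refine ⟨hv.left_mem.1, ?_⟩
  rintro rfl
  exact (hG.mem_farSet_iff.1 hv.mem_farSet).2.2 hv.left_mem.2.symm

theorem eq_left_coord (hv : HasCoords G x y v a b)
    (hc : c ∈ G.commonNeighbors x v) : c = a :=
  hG.subsingleton_commonNeighbors (hG.mem_farSet_iff.1 hv.mem_farSet).1.1 hc hv.left_mem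

theorem mem_farSet_of_adj (hv : HasCoords G x y v a b) (hvw : G.Adj v w) (hwa : w ≠ a)
    (hwb : w ≠ b) : w ∈ farSet G x y := by
  obtain ⟨⟨-, hnxv⟩, ⟨-, hnyv⟩⟩ := hG.mem_farSet_iff.1 hv.mem_farSet
  refine hG.mem_farSet_iff.2
    ⟨⟨?_, fun hxw => hwa (hG.eq_left_coord hv ⟨hxw, hvw⟩)⟩,
      ⟨?_, fun hyw => hwb (hG.eq_left_coord hv.symm ⟨hyw, hvw⟩)⟩⟩
  · rintro rfl
    exact hnxv hvw.symm
  · rintro rfl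
    exact hnyv hvw.symm

theorem ne_and_not_adj_of_mem_neighborSet_sdiff (hxy : G.Adj x y) (ha : a ∈ G.neighborSet x \ {y})
    (hb : b ∈ G.neighborSet y \ {x}) : a ≠ b ∧ ¬G.Adj a b := by
  obtain ⟨hxa, hay⟩ := ha
  obtain ⟨hyb, hbx⟩ := hb
  have hab : a ≠ b := by
    rintro rfl
    exact hG.not_adj_of_adj_of_adj hxa hyb hxy
  have hxb : x ≠ b := Ne.symm hbx
  exact ⟨hab, fun h => hay (hG.subsingleton_commonNeighbors hxb ⟨hxa, h.symm⟩ ⟨hxy, hyb.symm⟩)⟩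

theorem exists_vertex_hasCoords (hxy : G.Adj x y) (ha : a ∈ G.neighborSet x \ {y})
    (hb : b ∈ G.neighborSet y \ {x}) : ∃ v, HasCoords G x y v a b := by
  obtain ⟨hab, hnab⟩ := hG.ne_and_not_adj_of_mem_neighborSet_sdiff hxy ha hb
  obtain ⟨v, hav, hbv⟩ := (hG.existsUnique_mem_commonNeighbors hab hnab).exists
  have hxv : x ≠ v := by
    rintro rfl
    exact hG.not_adj_of_adj_of_adj hxy.symm hbv hb.1
  have hyv : y ≠ v := by
    rintro rfl
    exact hG.not_adj_of_adj_of_adj hxy hav ha.1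
  exact ⟨v, hG.mem_farSet_iff.2 ⟨⟨hxv, hG.not_adj_of_adj_of_adj ha.1 hav.symm⟩,
    ⟨hyv, hG.not_adj_of_adj_of_adj hb.1 hbv.symm⟩⟩, ⟨ha.1, hav.symm⟩, ⟨hb.1, hbv.symm⟩⟩

theorem hasCoords_vertex_unique (hxy : G.Adj x y) (hv : HasCoords G x y v a b)
    (hw : HasCoords G x y w a b) : v = w := by
  have hab := (hG.ne_and_not_adj_of_mem_neighborSet_sdiff hxy (hG.left_coord_mem hv)
    (hG.left_coord_mem hv.symm)).1
  exact hG.subsingleton_commonNeighbors hab ⟨hv.left_mem.2.symm, hv.right_mem.2.symm⟩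
    ⟨hw.left_mem.2.symm, hw.right_mem.2.symm⟩

theorem exists_equiv_farSet_hasCoords (hxy : G.Adj x y) :
    ∃ e : ↥(G.neighborSet x \ {y}) × ↥(G.neighborSet y \ {x}) ≃ farSet G x y,
      ∀ p, HasCoords G x y (e p) p.1 p.2 := by
  choose f hf using fun p : ↥(G.neighborSet x \ {y}) × ↥(G.neighborSet y \ {x}) =>
    hG.exists_vertex_hasCoords hxy p.1.2 p.2.2
  refine ⟨Equiv.ofBijective (fun p => ⟨f p, (hf p).mem_farSet⟩)
    ⟨fun p q hpq => ?_, fun v => ?_⟩, hf⟩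
  · have hfpq : f p = f q := congrArg Subtype.val hpq
    have hq : HasCoords G x y (f p) q.1 q.2 := hfpq ▸ hf q
    exact Prod.ext (Subtype.ext (hG.eq_left_coord hq (hf p).left_mem))
      (Subtype.ext (hG.eq_left_coord hq.symm (hf p).right_mem))
  · obtain ⟨a, b, hv⟩ := hG.exists_hasCoords v.2
    exact ⟨(⟨a, hG.left_coord_mem hv⟩, ⟨b, hG.left_coord_mem hv.symm⟩),
      Subtype.ext (hG.hasCoords_vertex_unique hxy (hf _) hv)⟩

theorem exists_mem_farSet_mem_commonNeighbors (hv : HasCoords G x y v a b)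
    (hw : HasCoords G x y w a' b') (ha : a ≠ a') (hb : b ≠ b') (hvw : ¬G.Adj v w) :
    ∃ z ∈ farSet G x y, z ∈ G.commonNeighbors v w := by
  have hne : v ≠ w := by
    rintro rfl
    exact ha (hG.eq_left_coord hw hv.left_mem)
  obtain ⟨z, hz⟩ := (hG.existsUnique_mem_commonNeighbors hne hvw).exists
  refine ⟨z, hG.mem_farSet_of_adj hv hz.1 ?_ ?_, hz⟩
  · rintro rfl
    exact ha (hG.eq_left_coord hw ⟨hv.left_mem.1, hz.2⟩)
  · rintro rfl
    exact hb (hG.eq_left_coord hw.symm ⟨hv.right_mem.1, hz.2⟩)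

theorem exists_adj_hasCoords (hxy : G.Adj x y) (hv : HasCoords G x y v a b)
    (hc : c ∈ G.neighborSet y \ {x}) (hcb : c ≠ b) :
    ∃ u a', HasCoords G x y u a' c ∧ G.Adj v u ∧ a ≠ a' := by
  have hvc : v ≠ c := by
    rintro rfl
    exact (hG.mem_farSet_iff.1 hv.mem_farSet).2.2 hc.1
  have hnvc : ¬G.Adj v c := fun h => hcb (hG.eq_left_coord hv.symm ⟨hc.1, h⟩)
  obtain ⟨u, hvu, hcu⟩ := (hG.existsUnique_mem_commonNeighbors hvc hnvc).exists
  have hua : u ≠ a := by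
    rintro rfl
    have ha := hG.left_coord_mem hv
    exact (hG.ne_and_not_adj_of_mem_neighborSet_sdiff hxy ha hc).2 hcu.symm
  have hub : u ≠ b := by
    rintro rfl
    exact hG.not_adj_of_adj_of_adj hv.right_mem.1 hcu hc.1
  have hu := hG.mem_farSet_of_adj hv hvu hua hub
  obtain ⟨a', _, hu'⟩ := hG.exists_hasCoords hu
  refine ⟨u, a', ⟨hu, hu'.left_mem, hc.1, hcu.symm⟩, hvu, ?_⟩
  rintro rfl
  exact hG.not_adj_of_adj_of_adj hv.left_mem.2 hu'.left_mem.2 hvu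

end Coordinates

section Distance

variable {v w : farSet G x y}

theorem dist_induce_farSet_ne_three_of_ne_of_ne (hv : HasCoords G x y v a b)
    (hw : HasCoords G x y w a' b') (ha : a ≠ a') (hb : b ≠ b') :
    (G.induce (farSet G x y)).dist v w ≠ 3 := by
  intro h
  have hlt : 2 < (G.induce (farSet G x y)).edist v w := by
    rw [SimpleGraph.dist, ENat.toNat_eq_iff three_ne_zero] at h
    rw [h]
    decide
  obtain ⟨-, hnvw, hempty⟩ := two_lt_edist_iff.1 hlt
  obtain ⟨z, hz, hvwz⟩ := hG.exists_mem_farSet_mem_commonNeighbors hv hw ha hb hnvw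
  exact Set.eq_empty_iff_forall_notMem.1 hempty ⟨z, hz⟩ hvwz

theorem two_lt_edist_induce_farSet_of_left_eq (hv : HasCoords G x y v a b)
    (hw : HasCoords G x y w a b') (hb : b ≠ b') : 2 < (G.induce (farSet G x y)).edist v w := by
  have hne : v.1 ≠ w := fun h =>
    hb (hG.eq_left_coord hw.symm (h ▸ hv.right_mem))
  refine two_lt_edist_iff.2 ⟨Subtype.coe_ne_coe.1 hne,
    hG.not_adj_of_adj_of_adj hv.left_mem.2 hw.left_mem.2,
    Set.eq_empty_iff_forall_notMem.2 fun z hz => ?_⟩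
  have hza : z.1 = a := hG.subsingleton_commonNeighbors hne hz ⟨hv.left_mem.2, hw.left_mem.2⟩
  exact (hG.mem_farSet_iff.1 z.2).1.2 (hza ▸ hv.left_mem.1)

theorem dist_induce_farSet_eq_three_of_left_eq (hxy : G.Adj x y)
    (hB : 3 ≤ #↥(G.neighborSet y \ {x})) (hv : HasCoords G x y v a b)
    (hw : HasCoords G x y w a b') (hb : b ≠ b') :
    (G.induce (farSet G x y)).dist v w = 3 := by
  have hlt := hG.two_lt_edist_induce_farSet_of_left_eq hv hw hb
  obtain ⟨⟨c, hc⟩, hcb, hcb'⟩ := exists_ne_ne_of_three_le hB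
    ⟨b, hG.left_coord_mem hv.symm⟩ ⟨b', hG.left_coord_mem hw.symm⟩
  rw [ne_eq, Subtype.mk.injEq] at hcb hcb'
  obtain ⟨u, a', hu, hvu, ha⟩ := hG.exists_adj_hasCoords hxy hv hc hcb
  have huw : ¬G.Adj u w := fun h => Set.eq_empty_iff_forall_notMem.1
    (two_lt_edist_iff.1 hlt).2.2 ⟨u, hu.mem_farSet⟩ ⟨hvu, h.symm⟩
  obtain ⟨z, hz, huz, hwz⟩ := hG.exists_mem_farSet_mem_commonNeighbors hu hw ha.symm hcb' huw
  let Γ := G.induce (farSet G x y)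
  have hvu' : Γ.Adj v ⟨u, hu.mem_farSet⟩ := hvu
  have huz' : Γ.Adj ⟨u, hu.mem_farSet⟩ ⟨z, hz⟩ := huz
  have hzw' : Γ.Adj ⟨z, hz⟩ w := hwz.symm
  exact dist_eq_three_of_two_lt_edist_of_adj hlt hvu' huz' hzw'

theorem dist_induce_farSet_eq_three_iff (hxy : G.Adj x y) (hA : 3 ≤ #↥(G.neighborSet x \ {y}))
    (hB : 3 ≤ #↥(G.neighborSet y \ {x})) (hv : HasCoords G x y v a b)
    (hw : HasCoords G x y w a' b') :
    (G.induce (farSet G x y)).dist v w = 3 ↔ a ≠ a' ∧ b = b' ∨ b ≠ b' ∧ a = a' := by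
  obtain rfl | ha := eq_or_ne a a' <;> obtain rfl | hb := eq_or_ne b b'
  · have hvw : v = w := Subtype.ext (hG.hasCoords_vertex_unique hxy hv hw)
    simp [hvw]
  · simpa [hb] using hG.dist_induce_farSet_eq_three_of_left_eq hxy hB hv hw hb
  · have hdist : (G.induce (farSet G x y)).dist v w = 3 := by
      rw [dist_induce_congr (farSet_comm G x y)]
      exact hG.dist_induce_farSet_eq_three_of_left_eq hxy.symm hA hv.symm hw.symm ha
    simpa [ha] using hdist
  · simpa [ha, hb] using hG.dist_induce_farSet_ne_three_of_ne_of_ne hv hw ha hb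

end Distance

end IsMoore

theorem moore57_gamma3_iso_box_product_general (hG : IsMoore G) {x y : V} (hxy : G.Adj x y)
    (hA : 3 ≤ #↥(G.neighborSet x \ {y})) (hB : 3 ≤ #↥(G.neighborSet y \ {x}))
    {Γ₃ : SimpleGraph (farSet G x y)}
    (hΓ₃ : ∀ v w, Γ₃.Adj v w ↔ (G.induce (farSet G x y)).dist v w = 3) :
    Nonempty (Γ₃ ≃g
      completeGraph ↥(G.neighborSet x \ {y}) □ completeGraph ↥(G.neighborSet y \ {x})) := by
  obtain ⟨e, he⟩ := hG.exists_equiv_farSet_hasCoords hxy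
  refine ⟨Iso.symm ⟨e, fun {p q} => ?_⟩⟩
  rw [hΓ₃, hG.dist_induce_farSet_eq_three_iff hxy hA hB (he p) (he q), boxProd_adj]
  simp only [completeGraph_eq_top, top_adj, ne_eq, Subtype.ext_iff]

end

/-- Let `G` be a Moore graph of degree 57 (a strongly regular graph with
parameters (3250, 57, 0, 1)), let `x, y` be adjacent vertices, let `Γ` be the subgraph of `G`
induced on the vertices at distance 2 (in `G`) from both `x` and `y`, and let `Γ₃` be the graph
on the same vertex set with two vertices adjacent iff their distance in `Γ` is 3.  Then `Γ₃` is
isomorphic to the Cartesian (box) product `K₅₆ □ K₅₆`. -/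
theorem moore57_gamma3_iso_box_product
    {V : Type*} [Fintype V] [DecidableEq V] (G : SimpleGraph V) [DecidableRel G.Adj]
    (hG : G.IsSRGWith 3250 57 0 1)
    (x y : V) (hxy : G.Adj x y)
    (Γ : SimpleGraph {v : V | G.dist x v = 2 ∧ G.dist y v = 2})
    (hΓ : Γ = G.induce {v : V | G.dist x v = 2 ∧ G.dist y v = 2})
    (Γ₃ : SimpleGraph {v : V | G.dist x v = 2 ∧ G.dist y v = 2})
    (hΓ₃ : ∀ a b, Γ₃.Adj a b ↔ Γ.dist a b = 3) :
    Nonempty (Γ₃ ≃g (completeGraph (Fin 56) □ completeGraph (Fin 56))) := by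
  subst hΓ
  have hA := mk_neighborSet_sdiff_singleton (hG.regular x) hxy
  have hB := mk_neighborSet_sdiff_singleton (hG.regular y) hxy.symm
  obtain ⟨φ⟩ := moore57_gamma3_iso_box_product_general (.of_isSRGWith hG) hxy
    (by rw [hA]; norm_num) (by rw [hB]; norm_num) hΓ₃
  obtain ⟨eA⟩ := Cardinal.mk_eq_nat_iff.1 hA
  obtain ⟨eB⟩ := Cardinal.mk_eq_nat_iff.1 hB
  exact ⟨φ.trans (boxProdCongr (.completeGraph eA) (.completeGraph eB))⟩
end

section
/- Let G be a Moore graph of degree 57, let x, y be adjacent vertices of G, and let Γ be the induced subgraph of G on the vertices at distance 2 from both x and y. Let u, v, w be vertices of Γ with distances (in Γ) d(v,w) = 3, d(u,w) = 2, d(u,v) = 2. Then the number of vertices z of Γ with d(z,u) = 1, d(z,v) = 3, d(z,w) = 3 is exactly 1. -/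
/-!
Let `X` and `Y` be the neighbours of `x` and of `y`. Two distinct nonadjacent vertices of `Γ` have
a unique common neighbour in `G`; they are at distance 2 in `Γ` when it lies in `Γ`, and at
distance greater than 2 when it lies in `X ∪ Y`.

Let `a ∈ X ∪ Y` be the common neighbour of `v` and `w`. The vertices at distance 1 from `u` and at
distance 3 from both `v` and `w` are exactly the common neighbours of `u` and `a` in `G`. Indeed,
a neighbour `z` of `u` and `a` has common neighbour `a ∉ Γ` with `v` and with `w`, so these are
too far from `z` for distance 2, while the paths through `u` give distance at most 3. Conversely,
if `z`, `v` and `w` are pairwise at distance 3, two of the three common neighbours involved lie in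
the same one of `X` and `Y`; both are adjacent to the vertex shared by the two pairs, so they
coincide, and then all three are equal to `a`. Since `u` is at distance 2 from `v` in `Γ`, it is
not adjacent to `a`, so there is exactly one such `z`.
-/

open SimpleGraph

section Dist

variable {V : Type*} {H : SimpleGraph V} {a b c : V}

theorem dist_eq_two_iff :
    H.dist a b = 2 ↔ a ≠ b ∧ ¬ H.Adj a b ∧ (H.commonNeighbors a b).Nonempty := by
  rw [← edist_eq_two_iff]
  exact ENat.toNat_eq_iff two_ne_zero

theorem dist_eq_three_of_adj_of_dist_eq_two (hab : H.Adj a b) (hbc : H.dist b c = 2)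
    (hac : ¬ H.Adj a c) (hac_two : H.dist a c ≠ 2) : H.dist a c = 3 := by
  have hbc_reach : H.Reachable b c := .of_dist_ne_zero (hbc ▸ two_ne_zero)
  have hne : a ≠ c := by
    rintro rfl
    exact (dist_eq_two_iff.mp hbc).2.1 hab.symm
  have hlower := (hab.reachable.trans hbc_reach).one_lt_dist_of_ne_of_not_adj hne hac
  have hupper := hab.reachable.dist_triangle_left c
  rw [dist_eq_one_iff_adj.mpr hab, hbc] at hupper
  omega

end Dist

/-- Moore graphs of diameter 2, as the graphs of diameter at most 2 and girth at least 5. Both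
conditions are expressed by common neighbours. Infinite graphs and stars are allowed. -/
structure IsMooreDiamTwo {V : Type*} (G : SimpleGraph V) : Prop where
  cliqueFree_three : G.CliqueFree 3
  existsUnique_mem_commonNeighbors {a b : V} :
    a ≠ b → ¬ G.Adj a b → ∃! c, c ∈ G.commonNeighbors a b

theorem isMooreDiamTwo_of_isSRGWith {V : Type*} [Fintype V] {G : SimpleGraph V}
    [DecidableRel G.Adj] {n k : ℕ} (hG : G.IsSRGWith n k 0 1) : IsMooreDiamTwo G where
  cliqueFree_three s hs := by
    classical
    obtain ⟨a, b, c, hab, hac, hbc, -⟩ := is3Clique_iff.mp hs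
    exact (Fintype.card_eq_zero_iff.mp (hG.of_adj a b hab)).false ⟨c, hac, hbc⟩
  existsUnique_mem_commonNeighbors {a b} hne hab := by
    obtain ⟨⟨c, hc⟩, hunique⟩ := Fintype.card_eq_one_iff.mp (hG.of_not_adj hne hab)
    exact ⟨c, hc, fun d hd => congrArg Subtype.val (hunique ⟨d, hd⟩)⟩

/-- The common distance-2 vertices of `x` and `y`, which form the vertex set of the graph `Γ`. -/
def distTwoSet {V : Type*} (G : SimpleGraph V) (x y : V) : Set V :=
  {v | G.dist x v = 2 ∧ G.dist y v = 2}

theorem distTwoSet_comm {V : Type*} (G : SimpleGraph V) (x y : V) :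
    distTwoSet G x y = distTwoSet G y x :=
  Set.ext fun _ => and_comm

namespace IsMooreDiamTwo

variable {V : Type*} {G : SimpleGraph V} {a b c d x y : V}

section CommonNeighbor

variable (hG : IsMooreDiamTwo G)
include hG

theorem not_adj_of_adj_of_adj (hac : G.Adj a c) (hbc : G.Adj b c) : ¬ G.Adj a b := by
  classical
  exact fun hab => hG.cliqueFree_three _ (is3Clique_triple_iff.mpr ⟨hab, hac, hbc⟩)

theorem eq_of_mem_commonNeighbors (hne : a ≠ b) (hc : c ∈ G.commonNeighbors a b)
    (hd : d ∈ G.commonNeighbors a b) : c = d :=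
  (hG.existsUnique_mem_commonNeighbors hne (hG.not_adj_of_adj_of_adj hc.1 hc.2)).unique hc hd

theorem dist_eq_two_iff_ne_and_not_adj : G.dist a b = 2 ↔ a ≠ b ∧ ¬ G.Adj a b := by
  rw [dist_eq_two_iff]
  exact ⟨fun h => ⟨h.1, h.2.1⟩,
    fun h => ⟨h.1, h.2, (hG.existsUnique_mem_commonNeighbors h.1 h.2).exists⟩⟩

theorem mem_distTwoSet_iff :
    a ∈ distTwoSet G x y ↔ (x ≠ a ∧ ¬ G.Adj x a) ∧ y ≠ a ∧ ¬ G.Adj y a := by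
  simp only [distTwoSet, Set.mem_ofPred_eq, hG.dist_eq_two_iff_ne_and_not_adj]

end CommonNeighbor

section Induce

variable {S : Set V} {s t u z : S} (hG : IsMooreDiamTwo G)
include hG

theorem dist_induce_eq_two_iff (hne : s ≠ t) (ha : a ∈ G.commonNeighbors s t) :
    (G.induce S).dist s t = 2 ↔ a ∈ S := by
  rw [dist_eq_two_iff]
  constructor
  · rintro ⟨-, -, e, he⟩
    exact hG.eq_of_mem_commonNeighbors (Subtype.coe_ne_coe.mpr hne) he ha ▸ e.2
  · exact fun haS => ⟨hne, hG.not_adj_of_adj_of_adj ha.1 ha.2, ⟨a, haS⟩, ha⟩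

theorem not_adj_of_dist_induce_eq_two (hst : (G.induce S).dist s t = 2) (hta : G.Adj t a)
    (haS : a ∉ S) : ¬ G.Adj s a := fun hsa =>
  haS ((hG.dist_induce_eq_two_iff (dist_eq_two_iff.mp hst).1 ⟨hsa, hta⟩).mp hst)

theorem dist_induce_eq_three (hza : G.Adj z a) (hta : G.Adj t a) (haS : a ∉ S)
    (hzu : G.Adj z u) (hut : (G.induce S).dist u t = 2) : (G.induce S).dist z t = 3 :=
  dist_eq_three_of_adj_of_dist_eq_two hzu hut (hG.not_adj_of_adj_of_adj hza hta)
    fun hzt => hG.not_adj_of_dist_induce_eq_two hzt hta haS hza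

end Induce

section DistTwoSet

variable {s t r v w : distTwoSet G x y} (hG : IsMooreDiamTwo G)
include hG

theorem notMem_distTwoSet_of_adj (ha : G.Adj x a ∨ G.Adj y a) : a ∉ distTwoSet G x y := by
  rw [hG.mem_distTwoSet_iff]
  tauto

theorem ne_and_ne_of_mem_distTwoSet_of_adj (ha : a ∈ distTwoSet G x y) (hab : G.Adj a b) :
    x ≠ b ∧ y ≠ b := by
  obtain ⟨⟨-, hxa⟩, -, hya⟩ := hG.mem_distTwoSet_iff.mp ha
  exact ⟨fun h => hxa (h ▸ hab.symm), fun h => hya (h ▸ hab.symm)⟩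

theorem exists_mem_commonNeighbors_adj_of_dist_eq_three
    (hst : (G.induce (distTwoSet G x y)).dist s t = 3) :
    ∃ a ∈ G.commonNeighbors s t, G.Adj x a ∨ G.Adj y a := by
  have hne : s ≠ t := by
    rintro rfl
    simp at hst
  have hadj : ¬ G.Adj s t := fun h => by
    have : (G.induce (distTwoSet G x y)).dist s t = 1 := dist_eq_one_iff_adj.mpr h
    omega
  obtain ⟨a, ha⟩ :=
    (hG.existsUnique_mem_commonNeighbors (Subtype.coe_ne_coe.mpr hne) hadj).exists
  have haS : a ∉ distTwoSet G x y := fun haS => by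
    have := (hG.dist_induce_eq_two_iff hne ha).mpr haS
    omega
  have hne_xy := hG.ne_and_ne_of_mem_distTwoSet_of_adj s.2 ha.1
  rw [hG.mem_distTwoSet_iff] at haS
  exact ⟨a, ha, by tauto⟩

theorem adj_of_mem_commonNeighbors_of_dist_eq_three (hne : v ≠ w)
    (ha : a ∈ G.commonNeighbors v w) (ha_xy : G.Adj x a ∨ G.Adj y a)
    (hrv : (G.induce (distTwoSet G x y)).dist r v = 3)
    (hrw : (G.induce (distTwoSet G x y)).dist r w = 3) : G.Adj r a := by
  obtain ⟨b, ⟨hrb, hvb⟩, hb_xy⟩ := hG.exists_mem_commonNeighbors_adj_of_dist_eq_three hrv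
  obtain ⟨c, ⟨hrc, hwc⟩, hc_xy⟩ := hG.exists_mem_commonNeighbors_adj_of_dist_eq_three hrw
  have eq_of_adj_x {s : distTwoSet G x y} {d e : V} (hd : G.Adj s d) (he : G.Adj s e)
      (hxd : G.Adj x d) (hxe : G.Adj x e) : d = e :=
    hG.eq_of_mem_commonNeighbors (hG.mem_distTwoSet_iff.mp s.2).1.1 ⟨hxd, hd⟩ ⟨hxe, he⟩
  have eq_of_adj_y {s : distTwoSet G x y} {d e : V} (hd : G.Adj s d) (he : G.Adj s e)
      (hyd : G.Adj y d) (hye : G.Adj y e) : d = e :=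
    hG.eq_of_mem_commonNeighbors (hG.mem_distTwoSet_iff.mp s.2).2.1 ⟨hyd, hd⟩ ⟨hye, he⟩
  have pigeonhole : b = a ∨ c = a ∨ b = c := by
    rcases ha_xy with hxa | hya <;> rcases hb_xy with hxb | hyb
    · exact .inl (eq_of_adj_x hvb ha.1 hxb hxa)
    · rcases hc_xy with hxc | hyc
      · exact .inr (.inl (eq_of_adj_x hwc ha.2 hxc hxa))
      · exact .inr (.inr (eq_of_adj_y hrb hrc hyb hyc))
    · rcases hc_xy with hxc | hyc
      · exact .inr (.inr (eq_of_adj_x hrb hrc hxb hxc))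
      · exact .inr (.inl (eq_of_adj_y hwc ha.2 hyc hya))
    · exact .inl (eq_of_adj_y hvb ha.1 hyb hya)
  rcases pigeonhole with rfl | rfl | rfl
  · exact hrb
  · exact hrc
  · exact hG.eq_of_mem_commonNeighbors (Subtype.coe_ne_coe.mpr hne) ⟨hvb, hwc⟩ ha ▸ hrb

theorem mem_distTwoSet_of_adj_of_adj_left (hxy : G.Adj x y) (hxa : G.Adj x a) (hya : y ≠ a)
    (hba : G.Adj b a) (hxb : x ≠ b) : b ∈ distTwoSet G x y := by
  have hxb_adj : ¬ G.Adj x b := hG.not_adj_of_adj_of_adj hxa hba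
  have hyb_adj : ¬ G.Adj y b := fun h =>
    hxb (hG.eq_of_mem_commonNeighbors hya ⟨hxy.symm, hxa.symm⟩ ⟨h, hba.symm⟩)
  exact hG.mem_distTwoSet_iff.mpr ⟨⟨hxb, hxb_adj⟩, fun h => hxb_adj (h ▸ hxy), hyb_adj⟩

theorem mem_distTwoSet_of_adj_of_adj (hxy : G.Adj x y) (ha_xy : G.Adj x a ∨ G.Adj y a)
    (ha : x ≠ a ∧ y ≠ a) (hba : G.Adj b a) (hb : x ≠ b ∧ y ≠ b) : b ∈ distTwoSet G x y := by
  rcases ha_xy with hxa | hya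
  · exact hG.mem_distTwoSet_of_adj_of_adj_left hxy hxa ha.2 hba hb.1
  · rw [distTwoSet_comm]
    exact hG.mem_distTwoSet_of_adj_of_adj_left hxy.symm hya ha.1 hba hb.2

end DistTwoSet

end IsMooreDiamTwo

theorem moore57_x133_322_general {V : Type*} {G : SimpleGraph V} (hG : IsMooreDiamTwo G)
    {x y : V} (hxy : G.Adj x y) {u v w : distTwoSet G x y}
    (hvw : (G.induce (distTwoSet G x y)).dist v w = 3)
    (huw : (G.induce (distTwoSet G x y)).dist u w = 2)
    (huv : (G.induce (distTwoSet G x y)).dist u v = 2) :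
    {z : distTwoSet G x y | (G.induce (distTwoSet G x y)).dist z u = 1 ∧
      (G.induce (distTwoSet G x y)).dist z v = 3 ∧
      (G.induce (distTwoSet G x y)).dist z w = 3}.ncard = 1 := by
  obtain ⟨a, ⟨hva, hwa⟩, ha⟩ := hG.exists_mem_commonNeighbors_adj_of_dist_eq_three hvw
  have hne : v ≠ w := by
    rintro rfl
    simp at hvw
  have haS : a ∉ distTwoSet G x y := hG.notMem_distTwoSet_of_adj ha
  obtain ⟨z, ⟨huz, haz⟩, hunique⟩ := hG.existsUnique_mem_commonNeighbors
    (ne_of_mem_of_not_mem u.2 haS) (hG.not_adj_of_dist_induce_eq_two huv hva haS)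
  have hzS : z ∈ distTwoSet G x y := hG.mem_distTwoSet_of_adj_of_adj hxy ha
    (hG.ne_and_ne_of_mem_distTwoSet_of_adj v.2 hva) haz.symm
    (hG.ne_and_ne_of_mem_distTwoSet_of_adj u.2 huz)
  refine Set.ncard_eq_one.mpr ⟨⟨z, hzS⟩, Set.eq_singleton_iff_unique_mem.mpr ⟨?_, ?_⟩⟩
  · exact ⟨dist_eq_one_iff_adj.mpr huz.symm,
      hG.dist_induce_eq_three haz.symm hva haS huz.symm huv,
      hG.dist_induce_eq_three haz.symm hwa haS huz.symm huw⟩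
  · rintro t ⟨htu, htv, htw⟩
    have hta := hG.adj_of_mem_commonNeighbors_of_dist_eq_three hne ⟨hva, hwa⟩ ha htv htw
    exact Subtype.ext (hunique t ⟨(dist_eq_one_iff_adj.mp htu).symm, hta.symm⟩)

/-- Lemma 3(a). In the distance-regular graph `Γ` induced by a Moore graph of
degree 57 on the common distance-2 neighbors of two adjacent vertices `x, y`, if `u, v, w` have
distances `d(v,w) = 3`, `d(u,w) = 2`, `d(u,v) = 2`, then there is exactly one vertex `z` with
`d(z,u) = 1`, `d(z,v) = 3`, `d(z,w) = 3`. -/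
theorem moore57_x133_322
    {α : Type*} [Fintype α] [DecidableEq α] (G : SimpleGraph α) [DecidableRel G.Adj]
    (hG : G.IsSRGWith 3250 57 0 1)
    (x y : α) (hxy : G.Adj x y)
    (Γ : SimpleGraph {v : α | G.dist x v = 2 ∧ G.dist y v = 2})
    (hΓ : Γ = G.induce {v : α | G.dist x v = 2 ∧ G.dist y v = 2})
    (u v w : {v : α | G.dist x v = 2 ∧ G.dist y v = 2})
    (hU : Γ.dist v w = 3) (hV : Γ.dist u w = 2) (hW : Γ.dist u v = 2) :
    {z : {v : α | G.dist x v = 2 ∧ G.dist y v = 2} |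
      Γ.dist z u = 1 ∧ Γ.dist z v = 3 ∧ Γ.dist z w = 3}.ncard = 1 := by
  subst hΓ
  exact moore57_x133_322_general (isMooreDiamTwo_of_isSRGWith hG) hxy hU hV hW
end

section
/- Let G be a Moore graph of degree 57, let x, y be adjacent vertices of G, and let Γ be the induced subgraph of G on the vertices at distance 2 from both x and y. Let u, v, w be vertices of Γ with pairwise distances (in Γ) d(v,w) = d(u,w) = d(u,v) = 2. Then each of the following six counts is at most 2: the number of vertices z of Γ with (d(z,u), d(z,v), d(z,w)) equal to (1,3,3), (2,3,3), (3,1,3), (3,2,3), (3,3,1), and (3,3,2), respectively. -/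
/-!
A vertex `z` of `Γ` has exactly one common neighbour `p` with `x` and exactly one common neighbour
`q` with `y`. Since `x` and `y` are adjacent, `p ≠ q`, so `z` is the only common neighbour of `p`
and `q` and is determined by the pair `(p, q)`. This places the vertices of `Γ` in a grid.

Distinct vertices of `Γ` are at distance more than 2 in `Γ` precisely when they have a common
neighbour in `G` outside `Γ`, that is, one adjacent to `x` or to `y`; this means that they share a
grid coordinate. If `v` and `w` share no coordinate, then a vertex sharing one with each of them is
one of the other two corners of the rectangle spanned by `v` and `w`.
-/

open SimpleGraph

/-- The Moore property in diameter 2: any two distinct vertices are joined by exactly one path of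
length at most 2. Besides the Moore graphs of diameter 2, the stars have this property. -/
structure IsMooreDiameterTwo {α : Type*} (G : SimpleGraph α) : Prop where
  commonNeighbors_eq_empty {a b : α} : G.Adj a b → G.commonNeighbors a b = ∅
  existsUnique_mem_commonNeighbors {a b : α} :
    a ≠ b → ¬ G.Adj a b → ∃! c, c ∈ G.commonNeighbors a b

/-- The vertices at distance 2 from both `x` and `y`; for adjacent `x` and `y` in a Moore graph,
the graph `Γ` is induced on this set. -/
abbrev commonDistTwo {α : Type*} (G : SimpleGraph α) (x y : α) : Set α :=
  {v : α | G.dist x v = 2 ∧ G.dist y v = 2}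

/-- A common neighbour of `a` and `b`, with an arbitrary value if there is none. The midpoints of
a vertex of `Γ` with `x` and with `y` serve as its two grid coordinates. -/
noncomputable def midpointOf {α : Type*} (G : SimpleGraph α) (a b : α) : α :=
  @Classical.epsilon α ⟨a⟩ (· ∈ G.commonNeighbors a b)

theorem edist_eq_coe_iff {α : Type*} {G : SimpleGraph α} {a b : α} {n : ℕ} (hn : n ≠ 0) :
    G.edist a b = n ↔ G.dist a b = n :=
  (ENat.toNat_eq_iff hn).symm

theorem two_lt_edist_of_dist_eq_three {α : Type*} {G : SimpleGraph α} {a b : α}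
    (h : G.dist a b = 3) : 2 < G.edist a b := by
  rw [(edist_eq_coe_iff three_ne_zero).2 h]
  norm_num

/-- Points of a grid with coordinates `p` and `q` are collinear if they share a coordinate. -/
theorem encard_collinear_le_two {β γ δ : Type*} {p : β → γ} {q : β → δ}
    (hpq : Function.Injective fun z ↦ (p z, q z)) {v w : β} (hp : p v ≠ p w) (hq : q v ≠ q w) :
    {z | (p z = p v ∨ q z = q v) ∧ (p z = p w ∨ q z = q w)}.encard ≤ 2 := by
  rw [← hpq.encard_image, ← Set.encard_pair (x := (p v, q w)) (y := (p w, q v)) (by simp [hp])]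
  refine Set.encard_le_encard ?_
  rintro _ ⟨z, ⟨hpv | hqv, hpw | hqw⟩, rfl⟩
  · exact absurd (hpv.symm.trans hpw) hp
  · exact .inl (Prod.ext hpv hqw)
  · exact .inr (Prod.ext hpw hqv)
  · exact absurd (hqv.symm.trans hqw) hq

namespace IsMooreDiameterTwo

theorem of_isSRGWith {α : Type*} [Fintype α] {G : SimpleGraph α}
    [DecidableRel G.Adj] {n k : ℕ} (hG : G.IsSRGWith n k 0 1) : IsMooreDiameterTwo G where
  commonNeighbors_eq_empty hab :=
    Set.isEmpty_coe_sort.1 (Fintype.card_eq_zero_iff.1 (hG.of_adj _ _ hab))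
  existsUnique_mem_commonNeighbors hne hab := by
    obtain ⟨⟨c, hc⟩, huniq⟩ := Fintype.card_eq_one_iff.1 (hG.of_not_adj hne hab)
    exact ⟨c, hc, fun d hd ↦ congrArg Subtype.val (huniq ⟨d, hd⟩)⟩

variable {α : Type*} {G : SimpleGraph α}

theorem eq_of_mem_commonNeighbors (hG : IsMooreDiameterTwo G) {a b c d : α} (hne : a ≠ b)
    (hc : c ∈ G.commonNeighbors a b) (hd : d ∈ G.commonNeighbors a b) : c = d := by
  by_cases hab : G.Adj a b
  · simp [hG.commonNeighbors_eq_empty hab] at hc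
  · exact (hG.existsUnique_mem_commonNeighbors hne hab).unique hc hd

theorem dist_eq_two_iff (hG : IsMooreDiameterTwo G) {a b : α} :
    G.dist a b = 2 ↔ a ≠ b ∧ ¬ G.Adj a b := by
  rw [← edist_eq_coe_iff two_ne_zero, Nat.cast_ofNat, edist_eq_two_iff]
  exact and_congr_right fun hne ↦ and_iff_left_of_imp fun hab ↦
    (hG.existsUnique_mem_commonNeighbors hne hab).exists

theorem midpointOf_mem_commonNeighbors (hG : IsMooreDiameterTwo G) {a b : α}
    (h : G.dist a b = 2) : midpointOf G a b ∈ G.commonNeighbors a b :=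
  have ⟨hne, hab⟩ := hG.dist_eq_two_iff.1 h
  Classical.epsilon_spec (hG.existsUnique_mem_commonNeighbors hne hab).exists

theorem midpointOf_eq_of_mem_commonNeighbors (hG : IsMooreDiameterTwo G) {a b c : α}
    (h : G.dist a b = 2) (hc : c ∈ G.commonNeighbors a b) : midpointOf G a b = c :=
  hG.eq_of_mem_commonNeighbors (hG.dist_eq_two_iff.1 h).1 (hG.midpointOf_mem_commonNeighbors h) hc

theorem dist_eq_two_of_adj (hG : IsMooreDiameterTwo G) {a b c : α} (hab : G.dist a b = 2)
    (hbc : G.Adj b c) (hac : ¬ G.Adj a c) : G.dist a c = 2 := by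
  refine hG.dist_eq_two_iff.2 ⟨?_, hac⟩
  rintro rfl
  exact (hG.dist_eq_two_iff.1 hab).2 hbc.symm

theorem midpointOf_eq_or_of_two_lt_edist (hG : IsMooreDiameterTwo G) {x y : α}
    {z v : commonDistTwo G x y} (h : 2 < (G.induce (commonDistTwo G x y)).edist z v) :
    midpointOf G x z = midpointOf G x v ∨ midpointOf G y z = midpointOf G y v := by
  obtain ⟨hne, hadj, hempty⟩ := two_lt_edist_iff.1 h
  obtain ⟨c, ⟨hzc, hvc⟩, -⟩ :=
    hG.existsUnique_mem_commonNeighbors (Subtype.coe_injective.ne hne) hadj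
  have hc : G.Adj x c ∨ G.Adj y c := by
    by_contra! hc
    have hcΓ : c ∈ commonDistTwo G x y :=
      ⟨hG.dist_eq_two_of_adj z.2.1 hzc hc.1, hG.dist_eq_two_of_adj z.2.2 hzc hc.2⟩
    exact Set.eq_empty_iff_forall_notMem.1 hempty ⟨c, hcΓ⟩ ⟨hzc, hvc⟩
  refine hc.imp (fun hxc ↦ ?_) (fun hyc ↦ ?_)
  · rw [hG.midpointOf_eq_of_mem_commonNeighbors z.2.1 ⟨hxc, hzc⟩,
      hG.midpointOf_eq_of_mem_commonNeighbors v.2.1 ⟨hxc, hvc⟩]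
  · rw [hG.midpointOf_eq_of_mem_commonNeighbors z.2.2 ⟨hyc, hzc⟩,
      hG.midpointOf_eq_of_mem_commonNeighbors v.2.2 ⟨hyc, hvc⟩]

theorem two_lt_edist_induce_of_midpointOf_eq (hG : IsMooreDiameterTwo G) {s : Set α} {a : α}
    (hs : ∀ z ∈ s, G.dist a z = 2) {v w : s} (hne : v ≠ w)
    (h : midpointOf G a v = midpointOf G a w) : 2 < (G.induce s).edist v w := by
  obtain ⟨ham, hvm⟩ := hG.midpointOf_mem_commonNeighbors (hs v v.2)
  have hwm : G.Adj w (midpointOf G a v) :=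
    h ▸ (hG.midpointOf_mem_commonNeighbors (hs w w.2)).2
  refine two_lt_edist_iff.2 ⟨hne, fun hvw ↦ ?_, Set.eq_empty_of_forall_notMem fun c hc ↦ ?_⟩
  · exact Set.eq_empty_iff_forall_notMem.1 (hG.commonNeighbors_eq_empty hvw) _ ⟨hvm, hwm⟩
  · have hcm : (c : α) = midpointOf G a v :=
      hG.eq_of_mem_commonNeighbors (Subtype.coe_injective.ne hne) hc ⟨hvm, hwm⟩
    exact (hG.dist_eq_two_iff.1 (hs c c.2)).2 (hcm ▸ ham)

theorem injective_midpointOf_prod (hG : IsMooreDiameterTwo G) {x y : α} (hxy : G.Adj x y) :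
    Function.Injective fun z : commonDistTwo G x y ↦ (midpointOf G x z, midpointOf G y z) := by
  intro z z' h
  obtain ⟨hp, hq⟩ := Prod.mk.inj h
  obtain ⟨hxp, hzp⟩ := hG.midpointOf_mem_commonNeighbors z.2.1
  obtain ⟨hyq, hzq⟩ := hG.midpointOf_mem_commonNeighbors z.2.2
  have hzp' := hp ▸ (hG.midpointOf_mem_commonNeighbors z'.2.1).2
  have hzq' := hq ▸ (hG.midpointOf_mem_commonNeighbors z'.2.2).2
  have hpq : midpointOf G x z ≠ midpointOf G y z := fun hpq ↦
    Set.eq_empty_iff_forall_notMem.1 (hG.commonNeighbors_eq_empty hxy) _ ⟨hxp, hpq ▸ hyq⟩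
  exact Subtype.ext <| hG.eq_of_mem_commonNeighbors hpq
    ⟨hzp.symm, hzq.symm⟩ ⟨hzp'.symm, hzq'.symm⟩

end IsMooreDiameterTwo

theorem moore57_sporadic_bounds_222_general {α : Type*} {G : SimpleGraph α}
    (hG : IsMooreDiameterTwo G) {x y : α} (hxy : G.Adj x y) {v w : commonDistTwo G x y}
    (hne : v ≠ w) (hvw : (G.induce (commonDistTwo G x y)).edist v w ≤ 2) :
    {z | 2 < (G.induce (commonDistTwo G x y)).edist z v ∧
      2 < (G.induce (commonDistTwo G x y)).edist z w}.encard ≤ 2 := by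
  have hp : midpointOf G x v ≠ midpointOf G x w := fun h ↦
    hvw.not_gt (hG.two_lt_edist_induce_of_midpointOf_eq (fun _ hz ↦ hz.1) hne h)
  have hq : midpointOf G y v ≠ midpointOf G y w := fun h ↦
    hvw.not_gt (hG.two_lt_edist_induce_of_midpointOf_eq (fun _ hz ↦ hz.2) hne h)
  refine (Set.encard_le_encard ?_).trans
    (encard_collinear_le_two (hG.injective_midpointOf_prod hxy) hp hq)
  exact fun z hz ↦ hz.imp hG.midpointOf_eq_or_of_two_lt_edist hG.midpointOf_eq_or_of_two_lt_edist

/-- Lemma 3(b). In the distance-regular graph `Γ` induced by a Moore graph of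
degree 57 on the common distance-2 neighbors of two adjacent vertices `x, y`, if `u, v, w` have
pairwise distances `d(v,w) = d(u,w) = d(u,v) = 2`, then each of the six counts of vertices `z`
with `(d(z,u), d(z,v), d(z,w))` equal to `(1,3,3)`, `(2,3,3)`, `(3,1,3)`, `(3,2,3)`, `(3,3,1)`,
`(3,3,2)` is at most 2. -/
theorem moore57_sporadic_bounds_222
    {α : Type*} [Fintype α] [DecidableEq α] (G : SimpleGraph α) [DecidableRel G.Adj]
    (hG : G.IsSRGWith 3250 57 0 1)
    (x y : α) (hxy : G.Adj x y)
    (Γ : SimpleGraph {v : α | G.dist x v = 2 ∧ G.dist y v = 2})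
    (hΓ : Γ = G.induce {v : α | G.dist x v = 2 ∧ G.dist y v = 2})
    (u v w : {v : α | G.dist x v = 2 ∧ G.dist y v = 2})
    (hU : Γ.dist v w = 2) (hV : Γ.dist u w = 2) (hW : Γ.dist u v = 2) :
    {z : {v : α | G.dist x v = 2 ∧ G.dist y v = 2} |
      Γ.dist z u = 1 ∧ Γ.dist z v = 3 ∧ Γ.dist z w = 3}.ncard ≤ 2 ∧
    {z : {v : α | G.dist x v = 2 ∧ G.dist y v = 2} |
      Γ.dist z u = 2 ∧ Γ.dist z v = 3 ∧ Γ.dist z w = 3}.ncard ≤ 2 ∧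
    {z : {v : α | G.dist x v = 2 ∧ G.dist y v = 2} |
      Γ.dist z u = 3 ∧ Γ.dist z v = 1 ∧ Γ.dist z w = 3}.ncard ≤ 2 ∧
    {z : {v : α | G.dist x v = 2 ∧ G.dist y v = 2} |
      Γ.dist z u = 3 ∧ Γ.dist z v = 2 ∧ Γ.dist z w = 3}.ncard ≤ 2 ∧
    {z : {v : α | G.dist x v = 2 ∧ G.dist y v = 2} |
      Γ.dist z u = 3 ∧ Γ.dist z v = 3 ∧ Γ.dist z w = 1}.ncard ≤ 2 ∧
    {z : {v : α | G.dist x v = 2 ∧ G.dist y v = 2} |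
      Γ.dist z u = 3 ∧ Γ.dist z v = 3 ∧ Γ.dist z w = 2}.ncard ≤ 2 := by
  subst hΓ
  have key {a b : commonDistTwo G x y} (hab : (G.induce (commonDistTwo G x y)).dist a b = 2)
      {s : Set (commonDistTwo G x y)}
      (hs : ∀ z ∈ s, (G.induce (commonDistTwo G x y)).dist z a = 3 ∧
        (G.induce (commonDistTwo G x y)).dist z b = 3) : s.ncard ≤ 2 := by
    have hab₂ := (edist_eq_coe_iff two_ne_zero).2 hab
    refine ENat.toNat_le_of_le_natCast <| (Set.encard_le_encard fun z hz ↦ ?_).trans <|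
      moore57_sporadic_bounds_222_general (.of_isSRGWith hG) hxy
        (edist_eq_two_iff.1 hab₂).1 hab₂.le
    exact (hs z hz).imp two_lt_edist_of_dist_eq_three two_lt_edist_of_dist_eq_three
  exact ⟨key hU fun _ h ↦ h.2, key hU fun _ h ↦ h.2,
    key hV fun _ h ↦ ⟨h.1, h.2.2⟩, key hV fun _ h ↦ ⟨h.1, h.2.2⟩,
    key hW fun _ h ↦ ⟨h.1, h.2.1⟩, key hW fun _ h ↦ ⟨h.1, h.2.1⟩⟩
end

section
/- Let M be the 27 × 27 integer matrix obtained by stacking vertically the three Kronecker products r ⊗ I₃ ⊗ I₃, I₃ ⊗ r ⊗ I₃, and I₃ ⊗ I₃ ⊗ r, where I₃ is the 3 × 3 identity matrix and r = (1, 1, 1). Let x_p = (0,0,0,0,53,1,0,1,0,0,53,1,53,2756,53,1,53,0,0,1,0,1,53,0,0,0,53) ∈ ℤ²⁷. Then x_p is the unique vector x ∈ ℤ²⁷ with all coordinates nonnegative satisfying M x = M x_p and x₂₇ = 53; i.e., the set of such vectors has exactly 1 element. -/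
/-!
The rows of `M` sum a `3 × 3 × 3` array over its axis-parallel lines, so the difference `d` of `x`
and `x_p` has all line sums zero. On the lines through the corners `(1,1,1)` and `(3,3,3)`, the
array `x_p` vanishes except at `(3,3,3)`, so there `d` is nonnegative, hence zero. In each
plane one of whose coordinates is `1`, the surviving entries of `d` form a `2 × 2` block with zero
line sums and a zero corner, so that plane vanishes too; the same argument then applies to all
remaining planes.
-/

open Matrix Kronecker

/-- The 1 × 3 all-ones row vector `r = (1, 1, 1)`. -/
def rOnes : Matrix (Fin 1) (Fin 3) ℤ := Matrix.of fun _ _ => 1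

/-- Lexicographic identification of index triples `(i₁, i₂, i₃)` with `Fin 27`
(first coordinate most significant), matching the lexicographic ordering of the triples
`(i₁, i₂, i₃) ∈ {1, 2, 3}³` used to index the 27 coordinates. -/
def colEquiv : (Fin 3 × Fin 3) × Fin 3 ≃ Fin 27 :=
  (Equiv.prodCongr finProdFinEquiv (Equiv.refl (Fin 3))).trans finProdFinEquiv

def rowEquiv1 : (Fin 1 × Fin 3) × Fin 3 ≃ Fin 9 :=
  (Equiv.prodCongr finProdFinEquiv (Equiv.refl (Fin 3))).trans finProdFinEquiv

def rowEquiv2 : (Fin 3 × Fin 1) × Fin 3 ≃ Fin 9 :=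
  (Equiv.prodCongr finProdFinEquiv (Equiv.refl (Fin 3))).trans finProdFinEquiv

def rowEquiv3 : (Fin 3 × Fin 3) × Fin 1 ≃ Fin 9 :=
  (Equiv.prodCongr finProdFinEquiv (Equiv.refl (Fin 1))).trans finProdFinEquiv

/-- The 27 × 27 matrix obtained by stacking vertically the three Kronecker products
`r ⊗ I₃ ⊗ I₃`, `I₃ ⊗ r ⊗ I₃` and `I₃ ⊗ I₃ ⊗ r`, where `I₃` is the 3 × 3 identity matrix and
`r = (1, 1, 1)` is the 1 × 3 all-ones row, with columns indexed lexicographically by triples. -/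
def M : Matrix (Fin 27) (Fin 27) ℤ :=
  Matrix.reindex
    ((rowEquiv1.sumCongr (rowEquiv2.sumCongr rowEquiv3)).trans
      (((Equiv.refl (Fin 9)).sumCongr finSumFinEquiv).trans finSumFinEquiv))
    colEquiv
    (Matrix.fromRows
      (rOnes ⊗ₖ (1 : Matrix (Fin 3) (Fin 3) ℤ) ⊗ₖ (1 : Matrix (Fin 3) (Fin 3) ℤ))
      (Matrix.fromRows
        ((1 : Matrix (Fin 3) (Fin 3) ℤ) ⊗ₖ rOnes ⊗ₖ (1 : Matrix (Fin 3) (Fin 3) ℤ))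
        ((1 : Matrix (Fin 3) (Fin 3) ℤ) ⊗ₖ (1 : Matrix (Fin 3) (Fin 3) ℤ) ⊗ₖ rOnes)))

/-- The particular solution of block 333 (coordinates indexed lexicographically by triples,
coordinate 27 corresponding to (3,3,3)). -/
def xp : Fin 27 → ℤ := ![0,0,0,0,53,1,0,1,0,0,53,1,53,2756,53,1,53,0,0,1,0,1,53,0,0,0,53]

/-- The fixed coordinates `(i, j)` of a distinguished line: either both lie outside the chosen
pairs `{a, b}` and `{a', b'}`, or both are the first elements of these pairs. In the cube
`{1, 2, 3}³` with pairs `a = 3`, `b = 2`, these are the lines through `(1,1,1)` and `(3,3,3)`. -/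
def IsPinned {ι κ : Type*} (a b : ι) (a' b' : κ) (i : ι) (j : κ) : Prop :=
  ((i ≠ a ∧ i ≠ b) ∧ (j ≠ a' ∧ j ≠ b')) ∨ (i = a ∧ j = a')

section ZeroLineSums

variable {ι κ μ G : Type*} [Fintype ι] [Fintype κ] [Fintype μ]

lemma eq_zero_of_sum_eq_zero_of_forall_ne [AddCommMonoid G] {f : ι → G} (hsum : ∑ i, f i = 0)
    {b : ι} (hf : ∀ i ≠ b, f i = 0) : f = 0 := by
  have hb : f b = 0 := by rw [← Fintype.sum_eq_single b hf, hsum]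
  funext i
  by_cases hi : i = b
  · rw [hi, hb, Pi.zero_apply]
  · exact hf i hi

lemma eq_zero_of_row_col_sums_of_block [AddCommMonoid G] {f : ι → κ → G}
    (hrow : ∀ i, ∑ j, f i j = 0) (hcol : ∀ j, ∑ i, f i j = 0) {a b : ι} {a' b' : κ}
    (hi : ∀ i, i ≠ a → i ≠ b → ∀ j, f i j = 0) (hj : ∀ j, j ≠ a' → j ≠ b' → ∀ i, f i j = 0)
    (hcorner : f a a' = 0) : f = 0 := by
  have hrow_a : f a = 0 := eq_zero_of_sum_eq_zero_of_forall_ne (hrow a) (b := b') fun j hjb => by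
    by_cases hja : j = a'
    · rw [hja, hcorner]
    · exact hj j hja hjb a
  have hcol_j (j : κ) : (f · j) = 0 :=
    eq_zero_of_sum_eq_zero_of_forall_ne (hcol j) (b := b) fun i hib => by
      by_cases hia : i = a
      · rw [hia, hrow_a, Pi.zero_apply]
      · exact hi i hia hib j
  funext i j
  exact congrFun (hcol_j j) i

/-- A three-dimensional array whose sum along every axis-parallel line is zero. For
`3 × 3 × 3` arrays these are the elements of the kernel of `M`. -/
structure HasZeroLineSums [AddCommMonoid G] (d : ι → κ → μ → G) : Prop where
  sum_fst : ∀ j k, ∑ i, d i j k = 0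
  sum_snd : ∀ i k, ∑ j, d i j k = 0
  sum_thd : ∀ i j, ∑ k, d i j k = 0

namespace HasZeroLineSums

variable {d : ι → κ → μ → G} {a b : ι} {a' b' : κ} {a'' b'' : μ}

theorem eq_zero_of_isPinned [AddCommMonoid G] (hd : HasZeroLineSums d)
    (h₁ : ∀ j k, IsPinned a' b' a'' b'' j k → ∀ i, d i j k = 0)
    (h₂ : ∀ i k, IsPinned a b a'' b'' i k → ∀ j, d i j k = 0)
    (h₃ : ∀ i j, IsPinned a b a' b' i j → ∀ k, d i j k = 0) : d = 0 := by
  have hplane_snd (j : κ) (hja : j ≠ a') (hjb : j ≠ b') : (fun i k => d i j k) = 0 :=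
    eq_zero_of_row_col_sums_of_block (hd.sum_thd · j) (hd.sum_fst j)
      (fun i hia hib => h₃ i j (.inl ⟨⟨hia, hib⟩, hja, hjb⟩))
      (fun k hka hkb => h₁ j k (.inl ⟨⟨hja, hjb⟩, hka, hkb⟩))
      (h₂ a a'' (.inr ⟨rfl, rfl⟩) j)
  have hplane_thd (k : μ) (hka : k ≠ a'') (hkb : k ≠ b'') : (fun i j => d i j k) = 0 :=
    eq_zero_of_row_col_sums_of_block (hd.sum_snd · k) (hd.sum_fst · k)
      (fun i hia hib => h₂ i k (.inl ⟨⟨hia, hib⟩, hka, hkb⟩))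
      (fun j hja hjb => h₁ j k (.inl ⟨⟨hja, hjb⟩, hka, hkb⟩))
      (h₃ a a' (.inr ⟨rfl, rfl⟩) k)
  funext i
  exact eq_zero_of_row_col_sums_of_block (hd.sum_thd i) (hd.sum_snd i)
    (fun j hja hjb => congrFun₂ (hplane_snd j hja hjb) i)
    (fun k hka hkb => congrFun₂ (hplane_thd k hka hkb) i)
    (h₁ a' a'' (.inr ⟨rfl, rfl⟩) i)

theorem eq_zero_of_isPinned_of_nonneg [AddCommMonoid G] [PartialOrder G] [IsOrderedAddMonoid G]
    (hd : HasZeroLineSums d)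
    (h₁ : ∀ j k, IsPinned a' b' a'' b'' j k → ∀ i, 0 ≤ d i j k)
    (h₂ : ∀ i k, IsPinned a b a'' b'' i k → ∀ j, 0 ≤ d i j k)
    (h₃ : ∀ i j, IsPinned a b a' b' i j → ∀ k, 0 ≤ d i j k) : d = 0 :=
  hd.eq_zero_of_isPinned
    (fun j k h => congrFun ((Fintype.sum_eq_zero_iff_of_nonneg (h₁ j k h)).1 (hd.sum_fst j k)))
    (fun i k h => congrFun ((Fintype.sum_eq_zero_iff_of_nonneg (h₂ i k h)).1 (hd.sum_snd i k)))
    (fun i j h => congrFun ((Fintype.sum_eq_zero_iff_of_nonneg (h₃ i j h)).1 (hd.sum_thd i j)))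

end HasZeroLineSums

end ZeroLineSums

section Kernel

variable {R : Type*} [Ring R]

section Kronecker

variable {κ μ : Type*} [Fintype κ] [Fintype μ] [DecidableEq κ] [DecidableEq μ]

lemma rOnes_kronecker_one_kronecker_one_mulVec (v : (Fin 3 × κ) × μ → R) (j : κ) (k : μ) :
    ((rOnes ⊗ₖ (1 : Matrix κ κ ℤ) ⊗ₖ (1 : Matrix μ μ ℤ)).map (Int.cast : ℤ → R) *ᵥ v) ((0, j), k) =
      ∑ i, v ((i, j), k) := by
  simp [mulVec, dotProduct, Fintype.sum_prod_type, rOnes, one_apply]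

lemma one_kronecker_rOnes_kronecker_one_mulVec (v : (κ × Fin 3) × μ → R) (i : κ) (k : μ) :
    (((1 : Matrix κ κ ℤ) ⊗ₖ rOnes ⊗ₖ (1 : Matrix μ μ ℤ)).map (Int.cast : ℤ → R) *ᵥ v) ((i, 0), k) =
      ∑ j, v ((i, j), k) := by
  simp [mulVec, dotProduct, Fintype.sum_prod_type_right, rOnes, one_apply]

lemma one_kronecker_one_kronecker_rOnes_mulVec (v : (κ × μ) × Fin 3 → R) (i : κ) (j : μ) :
    (((1 : Matrix κ κ ℤ) ⊗ₖ (1 : Matrix μ μ ℤ) ⊗ₖ rOnes).map (Int.cast : ℤ → R) *ᵥ v) ((i, j), 0) =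
      ∑ k, v ((i, j), k) := by
  simp [mulVec, dotProduct, Fintype.sum_prod_type, rOnes, one_apply, ite_and]

end Kronecker

lemma hasZeroLineSums_of_mulVec_eq_zero {v : Fin 27 → R}
    (hv : M.map (Int.cast : ℤ → R) *ᵥ v = 0) :
    HasZeroLineSums fun i j k => v (colEquiv ((i, j), k)) := by
  rw [M, reindex_apply, ← submatrix_map, submatrix_mulVec_equiv, Equiv.comp_symm_eq, Pi.zero_comp,
    fromRows_map, fromRows_mulVec, fromRows_map, fromRows_mulVec] at hv
  refine ⟨fun j k => ?_, fun i k => ?_, fun i j => ?_⟩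
  · exact (rOnes_kronecker_one_kronecker_one_mulVec (v ∘ colEquiv) j k).symm.trans
      (congrFun hv (.inl ((0, j), k)))
  · exact (one_kronecker_rOnes_kronecker_one_mulVec (v ∘ colEquiv) i k).symm.trans
      (congrFun hv (.inr (.inl ((i, 0), k))))
  · exact (one_kronecker_one_kronecker_rOnes_mulVec (v ∘ colEquiv) i j).symm.trans
      (congrFun hv (.inr (.inr ((i, j), 0))))

end Kernel

lemma xp_eq_zero_or_eq_last_of_isPinned_fst :
    ∀ j k, IsPinned 2 1 2 1 j k →
      ∀ i, xp (colEquiv ((i, j), k)) = 0 ∨ colEquiv ((i, j), k) = 26 := by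
  unfold IsPinned
  decide

lemma xp_eq_zero_or_eq_last_of_isPinned_snd :
    ∀ i k, IsPinned 2 1 2 1 i k →
      ∀ j, xp (colEquiv ((i, j), k)) = 0 ∨ colEquiv ((i, j), k) = 26 := by
  unfold IsPinned
  decide

lemma xp_eq_zero_or_eq_last_of_isPinned_thd :
    ∀ i j, IsPinned 2 1 2 1 i j →
      ∀ k, xp (colEquiv ((i, j), k)) = 0 ∨ colEquiv ((i, j), k) = 26 := by
  unfold IsPinned
  decide

theorem block333_unique_solution_general {R : Type*} [Ring R] [PartialOrder R]
    [IsOrderedAddMonoid R] {x : Fin 27 → R} (h_nonneg : ∀ n, xp n = 0 → 0 ≤ x n)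
    (hM : M.map (Int.cast : ℤ → R) *ᵥ x = M.map (Int.cast : ℤ → R) *ᵥ fun n => (xp n : R))
    (h_last : 53 ≤ x 26) : x = fun n => (xp n : R) := by
  have hker : M.map (Int.cast : ℤ → R) *ᵥ (x - fun n => (xp n : R)) = 0 := by
    rw [mulVec_sub, hM, sub_self]
  have hd_nonneg {n : Fin 27} (hn : xp n = 0 ∨ n = 26) : 0 ≤ x n - (xp n : R) := by
    rcases hn with hn | rfl
    · simpa [hn] using h_nonneg n hn
    · simpa [xp] using h_last
  have hd := (hasZeroLineSums_of_mulVec_eq_zero hker).eq_zero_of_isPinned_of_nonneg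
    (fun j k h i => hd_nonneg (xp_eq_zero_or_eq_last_of_isPinned_fst j k h i))
    (fun i k h j => hd_nonneg (xp_eq_zero_or_eq_last_of_isPinned_snd i k h j))
    (fun i j h k => hd_nonneg (xp_eq_zero_or_eq_last_of_isPinned_thd i j h k))
  funext n
  obtain ⟨⟨⟨i, j⟩, k⟩, rfl⟩ := colEquiv.surjective n
  exact sub_eq_zero.1 (congrFun (congrFun₂ hd i j) k)

/-- `x_p` is the unique nonnegative integer vector `x` with
`M x = M x_p` and `x₂₇ = 53` (block 333); i.e., this solution set is `{x_p}`, and in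
particular it has exactly 1 element. -/
theorem block333_unique_solution :
    {x : Fin 27 → ℤ | (∀ i, 0 ≤ x i) ∧ M.mulVec x = M.mulVec xp ∧ x 26 = 53} = {xp} ∧
    {x : Fin 27 → ℤ | (∀ i, 0 ≤ x i) ∧ M.mulVec x = M.mulVec xp ∧ x 26 = 53}.ncard = 1 := by
  have h_eq : {x : Fin 27 → ℤ | (∀ i, 0 ≤ x i) ∧ M.mulVec x = M.mulVec xp ∧ x 26 = 53} = {xp} :=
    Set.eq_singleton_iff_unique_mem.2 ⟨⟨by decide, rfl, rfl⟩, fun x ⟨h_nonneg, hM, h_last⟩ =>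
      -- Over `ℤ` the coefficient casts are definitionally the identity.
      block333_unique_solution_general (fun n _ => h_nonneg n) hM h_last.ge⟩
  exact ⟨h_eq, by rw [h_eq, Set.ncard_singleton]⟩
end
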